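/- arXiv:1209.3239 — 4 statements merged into one kernel-verified Lean document; each statement's English description precedes it below -/
import Mathlib

section
/- Let J be a unital Jordan algebra over a field k of characteristic ≠ 2 whose identity element decomposes as 1 = e_1 + ⋯ + e_n into pairwise orthogonal idempotents (e_i·e_j = 0 for i ≠ j). Define J_ii = {x ∈ J : x·e_i = x} and, for i ≠ j, J_ij = {x ∈ J : x·e_i = (1/2)x and x·e_j = (1/2)x}. Then for pairwise distinct indices i, j, k, l: J_ii·J_ii ⊆ J_ii, J_ij·J_ii ⊆ J_ij, J_ij·J_ij ⊆ J_ii + J_jj, J_ij·J_jk ⊆ J_ik, and J_ii·J_jj = J_ii·J_jk = J_ij·J_kl = 0. -/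
variable {k : Type*} [Field k] {J : Type*} [NonAssocRing J]
  [Module k J] [SMulCommClass k J J] [IsScalarTower k J J]

/-- The diagonal Peirce component `J_ii = {x ∈ J : x·e = x}` relative to an idempotent `e`. -/
def peirceDiag (k : Type*) [Field k] {J : Type*} [NonAssocRing J]
    [Module k J] [SMulCommClass k J J] [IsScalarTower k J J] (e : J) : Submodule k J where
  carrier := {x : J | x * e = x}
  add_mem' := by
    intro a b ha hb
    simp only [Set.mem_setOf_eq] at *
    rw [add_mul, ha, hb]
  zero_mem' := by simp
  smul_mem' := by
    intro r x hx
    simp only [Set.mem_setOf_eq] at *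
    rw [smul_mul_assoc, hx]

/-- The off-diagonal Peirce component
`J_ij = {x ∈ J : x·e_i = (1/2)·x and x·e_j = (1/2)·x}` relative to idempotents `e_i, e_j`. -/
def peirceOff (k : Type*) [Field k] {J : Type*} [NonAssocRing J]
    [Module k J] [SMulCommClass k J J] [IsScalarTower k J J] (a b : J) : Submodule k J where
  carrier := {x : J | x * a = (2⁻¹ : k) • x ∧ x * b = (2⁻¹ : k) • x}
  add_mem' := by
    intro u v hu hv
    simp only [Set.mem_setOf_eq] at *
    rw [add_mul, add_mul, hu.1, hu.2, hv.1, hv.2, smul_add]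
    exact ⟨rfl, rfl⟩
  zero_mem' := by simp
  smul_mem' := by
    intro r x hx
    simp only [Set.mem_setOf_eq] at *
    rw [smul_mul_assoc, smul_mul_assoc, hx.1, hx.2, smul_comm]
    exact ⟨rfl, rfl⟩

/-!
Everything takes place in the eigenspaces of right multiplication by an idempotent `e`. Putting
`(e, e, x)` into the linearized Jordan identity shows that multiplying by an eigenvector `x` of
eigenvalue `0` or `1` maps every eigenspace of `e` into itself, so the `0`- and `1`-eigenspaces
annihilate each other; putting `(e, x, y)` into it shows that `(x * y) * e` is a `1`-eigenvector
whenever `x` and `y` have the same eigenvalue. Since `J_ij` lies in the `1`-eigenspace of the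
idempotent `e_i + e_j`, the remaining `e_m` annihilate it.
-/

theorem isSMulRegular_two_of_two_ne_zero {M : Type*} [AddCommGroup M] [Module k M]
    (hchar : (2 : k) ≠ 0) : IsSMulRegular M 2 := by
  intro x y hxy
  refine IsSMulRegular.of_ne_zero hchar ?_
  simpa only [ofNat_smul_eq_nsmul] using hxy

theorem isIdempotentElem_add_of_mul_eq_zero {A : Type*} [NonUnitalNonAssocCommSemiring A]
    {a b : A} (ha : IsIdempotentElem a) (hb : IsIdempotentElem b) (hab : a * b = 0) :
    IsIdempotentElem (a + b) :=
  ha.add hb (by rw [mul_comm b a, hab, add_zero])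

theorem linearized_jordan_identity {A : Type*} [NonUnitalNonAssocCommRing A] [IsCommJordan A]
    (h2 : IsSMulRegular A 2) (a b c y : A) :
    a * ((b * c) * y) + b * ((c * a) * y) + c * ((a * b) * y) =
      (b * c) * (a * y) + (c * a) * (b * y) + (a * b) * (c * y) := by
  have two_nsmul_commutators : 2 • ((a * ((b * c) * y) - (b * c) * (a * y)) +
      (b * ((c * a) * y) - (c * a) * (b * y)) + (c * ((a * b) * y) - (a * b) * (c * y))) = 0 :=
    DFunLike.congr_fun (two_nsmul_lie_lmul_lmul_add_add_eq_zero a b c) y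
  have commutators := h2.right_eq_zero_of_smul two_nsmul_commutators
  rw [← sub_eq_zero, ← commutators]
  abel

section PeirceSpace

variable {R : Type*} [CommRing R] {A : Type*} [NonUnitalNonAssocRing A] [Module R A]
  [IsScalarTower R A A] {e x : A} {α : R}

/-- The Peirce space of `e` for the eigenvalue `α`: the eigenspace of right multiplication
by `e`. The Peirce components of a family of idempotents are cut out by such spaces. -/
def peirceSpace (e : A) (α : R) : Submodule R A :=
  Module.End.eigenspace (LinearMap.mulRight R e) α

theorem mem_peirceSpace : x ∈ peirceSpace e α ↔ x * e = α • x :=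
  Module.End.mem_eigenspace_iff

theorem mem_peirceSpace_zero : x ∈ peirceSpace e (0 : R) ↔ x * e = 0 := by
  rw [mem_peirceSpace, zero_smul]

theorem mem_peirceSpace_one : x ∈ peirceSpace e (1 : R) ↔ x * e = x := by
  rw [mem_peirceSpace, one_smul]

end PeirceSpace

section PeirceSpaceMul

variable {R : Type*} [CommRing R] {A : Type*} [NonUnitalNonAssocCommRing A] [IsCommJordan A]
  [Module R A] [SMulCommClass R A A] [IsScalarTower R A A] {e x y : A} {α β : R}

theorem mul_mem_peirceSpace_of_isUnit (h2 : IsSMulRegular A 2) (he : IsIdempotentElem e)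
    (hα : IsUnit (2 * α - 1)) (hx : x ∈ peirceSpace e α) (hy : y ∈ peirceSpace e β) :
    x * y ∈ peirceSpace e β := by
  rw [mem_peirceSpace] at *
  suffices (2 * α - 1) • (x * y * e) = (2 * α - 1) • β • (x * y) from
    hα.smul_left_cancel.mp this
  have jordan := linearized_jordan_identity h2 e e x y
  rw [he.eq, mul_comm e x, mul_comm e y, hx, hy] at jordan
  simp only [smul_mul_assoc, mul_smul_comm, mul_comm e (x * y)] at jordan
  linear_combination (norm := module) jordan

theorem mul_mem_peirceSpace_of_mem_zero (h2 : IsSMulRegular A 2) (he : IsIdempotentElem e)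
    (hx : x ∈ peirceSpace e (0 : R)) (hy : y ∈ peirceSpace e β) : x * y ∈ peirceSpace e β :=
  mul_mem_peirceSpace_of_isUnit h2 he (by norm_num) hx hy

theorem mul_mem_peirceSpace_of_mem_one (h2 : IsSMulRegular A 2) (he : IsIdempotentElem e)
    (hx : x ∈ peirceSpace e (1 : R)) (hy : y ∈ peirceSpace e β) : x * y ∈ peirceSpace e β :=
  mul_mem_peirceSpace_of_isUnit h2 he (by norm_num) hx hy

theorem mul_eq_zero_of_mem_peirceSpace_one_zero (h2 : IsSMulRegular A 2)
    (he : IsIdempotentElem e) (hx : x ∈ peirceSpace e (1 : R))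
    (hy : y ∈ peirceSpace e (0 : R)) : x * y = 0 := by
  have mul_mem_zero : x * y ∈ peirceSpace e (0 : R) :=
    mul_mem_peirceSpace_of_mem_one h2 he hx hy
  have mul_mem_one : x * y ∈ peirceSpace e (1 : R) :=
    mul_comm y x ▸ mul_mem_peirceSpace_of_mem_zero h2 he hy hx
  rw [← mem_peirceSpace_one.mp mul_mem_one, mem_peirceSpace_zero.mp mul_mem_zero]

theorem mul_mul_mem_peirceSpace_one (h2 : IsSMulRegular A 2) (he : IsIdempotentElem e)
    (hx : x ∈ peirceSpace e α) (hy : y ∈ peirceSpace e α) :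
    x * y * e ∈ peirceSpace e (1 : R) := by
  rw [mem_peirceSpace] at hx hy
  rw [mem_peirceSpace_one]
  have jordan := linearized_jordan_identity h2 e x y e
  rw [he.eq, mul_comm e x, mul_comm e (x * y * e), hx, hy] at jordan
  simp only [smul_mul_assoc, mul_smul_comm, hx, hy, mul_comm y x] at jordan
  linear_combination (norm := module) jordan

end PeirceSpaceMul

theorem peirceDiag_eq_peirceSpace (a : J) : peirceDiag k a = peirceSpace a 1 := by
  ext x
  exact mem_peirceSpace_one.symm

theorem mem_peirceOff_iff_mem_peirceSpace {a b x : J} :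
    x ∈ peirceOff k a b ↔ x ∈ peirceSpace a (2⁻¹ : k) ∧ x ∈ peirceSpace b (2⁻¹ : k) :=
  (and_congr mem_peirceSpace mem_peirceSpace).symm

theorem peirceOff_le_peirceDiag_add (hchar : (2 : k) ≠ 0) (a b : J) :
    peirceOff k a b ≤ peirceDiag k (a + b) := by
  rintro x ⟨hxa, hxb⟩
  change x * (a + b) = x
  rw [mul_add, hxa, hxb, ← add_smul, ← two_mul, mul_inv_cancel₀ hchar, one_smul]

section PeirceComponentsMul

variable {A : Type*} [NonAssocCommRing A] [IsCommJordan A] [Module k A] [SMulCommClass k A A]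
  [IsScalarTower k A A] {a b c d x y : A}

theorem peirceDiag_le_peirceSpace_zero (hchar : (2 : k) ≠ 0) (ha : IsIdempotentElem a)
    (hab : a * b = 0) : peirceDiag k a ≤ peirceSpace b 0 := by
  intro x hx
  have b_mem : b ∈ peirceSpace a (0 : k) := by rwa [mem_peirceSpace_zero, mul_comm]
  rw [peirceDiag_eq_peirceSpace] at hx
  exact mem_peirceSpace_zero.mpr (mul_eq_zero_of_mem_peirceSpace_one_zero
    (isSMulRegular_two_of_two_ne_zero hchar) ha hx b_mem)

theorem peirceOff_le_peirceSpace_zero (hchar : (2 : k) ≠ 0) (ha : IsIdempotentElem a)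
    (hb : IsIdempotentElem b) (hab : a * b = 0) (hac : a * c = 0) (hbc : b * c = 0) :
    peirceOff k a b ≤ peirceSpace c 0 :=
  (peirceOff_le_peirceDiag_add hchar a b).trans <|
    peirceDiag_le_peirceSpace_zero hchar (isIdempotentElem_add_of_mul_eq_zero ha hb hab)
      (by rw [add_mul, hac, hbc, add_zero])

theorem mul_mem_peirceDiag (hchar : (2 : k) ≠ 0) (ha : IsIdempotentElem a)
    (hx : x ∈ peirceDiag k a) (hy : y ∈ peirceDiag k a) : x * y ∈ peirceDiag k a := by
  rw [peirceDiag_eq_peirceSpace] at *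
  exact mul_mem_peirceSpace_of_mem_one (isSMulRegular_two_of_two_ne_zero hchar) ha hx hy

theorem mul_mem_peirceOff_of_mem_peirceOff_peirceDiag (hchar : (2 : k) ≠ 0)
    (ha : IsIdempotentElem a) (hb : IsIdempotentElem b) (hab : a * b = 0)
    (hx : x ∈ peirceOff k a b) (hy : y ∈ peirceDiag k a) : x * y ∈ peirceOff k a b := by
  have h2 : IsSMulRegular A 2 := isSMulRegular_two_of_two_ne_zero hchar
  have hyb : y ∈ peirceSpace b (0 : k) := peirceDiag_le_peirceSpace_zero hchar ha hab hy
  rw [peirceDiag_eq_peirceSpace] at hy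
  rw [mem_peirceOff_iff_mem_peirceSpace] at *
  rw [mul_comm]
  exact ⟨mul_mem_peirceSpace_of_mem_one h2 ha hy hx.1,
    mul_mem_peirceSpace_of_mem_zero h2 hb hyb hx.2⟩

theorem mul_mem_sup_peirceDiag_of_mem_peirceOff (hchar : (2 : k) ≠ 0)
    (ha : IsIdempotentElem a) (hb : IsIdempotentElem b) (hab : a * b = 0)
    (hx : x ∈ peirceOff k a b) (hy : y ∈ peirceOff k a b) :
    x * y ∈ peirceDiag k a ⊔ peirceDiag k b := by
  have h2 : IsSMulRegular A 2 := isSMulRegular_two_of_two_ne_zero hchar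
  have mul_mem_add : x * y ∈ peirceDiag k (a + b) :=
    mul_mem_peirceDiag hchar (isIdempotentElem_add_of_mul_eq_zero ha hb hab)
      (peirceOff_le_peirceDiag_add hchar a b hx) (peirceOff_le_peirceDiag_add hchar a b hy)
  have mul_eq_add : x * y * a + x * y * b = x * y := by rw [← mul_add]; exact mul_mem_add
  rw [mem_peirceOff_iff_mem_peirceSpace] at hx hy
  rw [peirceDiag_eq_peirceSpace, peirceDiag_eq_peirceSpace, ← mul_eq_add]
  exact Submodule.add_mem_sup (mul_mul_mem_peirceSpace_one h2 ha hx.1 hy.1)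
    (mul_mul_mem_peirceSpace_one h2 hb hx.2 hy.2)

theorem mul_mem_peirceOff_of_mem_peirceOff_peirceOff (hchar : (2 : k) ≠ 0)
    (ha : IsIdempotentElem a) (hb : IsIdempotentElem b) (hc : IsIdempotentElem c)
    (hab : a * b = 0) (hbc : b * c = 0) (hac : a * c = 0)
    (hx : x ∈ peirceOff k a b) (hy : y ∈ peirceOff k b c) : x * y ∈ peirceOff k a c := by
  have h2 : IsSMulRegular A 2 := isSMulRegular_two_of_two_ne_zero hchar
  have hxc : x ∈ peirceSpace c (0 : k) :=
    peirceOff_le_peirceSpace_zero hchar ha hb hab hac hbc hx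
  have hya : y ∈ peirceSpace a (0 : k) :=
    peirceOff_le_peirceSpace_zero hchar hb hc hbc (mul_comm a b ▸ hab) (mul_comm a c ▸ hac) hy
  rw [mem_peirceOff_iff_mem_peirceSpace] at *
  exact ⟨mul_comm y x ▸ mul_mem_peirceSpace_of_mem_zero h2 ha hya hx.1,
    mul_mem_peirceSpace_of_mem_zero h2 hc hxc hy.2⟩

theorem mul_eq_zero_of_mem_peirceDiag_peirceDiag (hchar : (2 : k) ≠ 0)
    (ha : IsIdempotentElem a) (hb : IsIdempotentElem b) (hab : a * b = 0)
    (hx : x ∈ peirceDiag k a) (hy : y ∈ peirceDiag k b) : x * y = 0 := by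
  have hya : y ∈ peirceSpace a (0 : k) :=
    peirceDiag_le_peirceSpace_zero hchar hb (mul_comm a b ▸ hab) hy
  rw [peirceDiag_eq_peirceSpace] at hx
  exact mul_eq_zero_of_mem_peirceSpace_one_zero (isSMulRegular_two_of_two_ne_zero hchar) ha hx hya

theorem mul_eq_zero_of_mem_peirceDiag_peirceOff (hchar : (2 : k) ≠ 0)
    (ha : IsIdempotentElem a) (hb : IsIdempotentElem b) (hc : IsIdempotentElem c)
    (hab : a * b = 0) (hbc : b * c = 0) (hac : a * c = 0)
    (hx : x ∈ peirceDiag k a) (hy : y ∈ peirceOff k b c) : x * y = 0 :=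
  mul_eq_zero_of_mem_peirceDiag_peirceDiag hchar ha
    (isIdempotentElem_add_of_mul_eq_zero hb hc hbc) (by rw [mul_add, hab, hac, add_zero]) hx
    (peirceOff_le_peirceDiag_add hchar b c hy)

theorem mul_eq_zero_of_mem_peirceOff_peirceOff (hchar : (2 : k) ≠ 0)
    (ha : IsIdempotentElem a) (hb : IsIdempotentElem b) (hc : IsIdempotentElem c)
    (hd : IsIdempotentElem d) (hab : a * b = 0) (hac : a * c = 0) (had : a * d = 0)
    (hbc : b * c = 0) (hbd : b * d = 0) (hcd : c * d = 0)
    (hx : x ∈ peirceOff k a b) (hy : y ∈ peirceOff k c d) : x * y = 0 :=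
  mul_eq_zero_of_mem_peirceDiag_peirceOff hchar (isIdempotentElem_add_of_mul_eq_zero ha hb hab)
    hc hd (by rw [add_mul, hac, hbc, add_zero]) hcd (by rw [add_mul, had, hbd, add_zero])
    (peirceOff_le_peirceDiag_add hchar a b hx) hy

end PeirceComponentsMul

theorem peirce_multiplication_many_idempotents_general (hchar : (2 : k) ≠ 0)
    (hcomm : ∀ x y : J, x * y = y * x)
    (hJordan : ∀ x y : J, ((x * x) * y) * x = (x * x) * (y * x))
    {ι : Type*} (e : ι → J)
    (hidem : ∀ i, e i * e i = e i)
    (horth : ∀ i j, i ≠ j → e i * e j = 0) :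
    (∀ i, ∀ x ∈ peirceDiag k (e i), ∀ y ∈ peirceDiag k (e i),
        x * y ∈ peirceDiag k (e i)) ∧
    (∀ i j, i ≠ j → ∀ x ∈ peirceOff k (e i) (e j), ∀ y ∈ peirceDiag k (e i),
        x * y ∈ peirceOff k (e i) (e j)) ∧
    (∀ i j, i ≠ j → ∀ x ∈ peirceOff k (e i) (e j), ∀ y ∈ peirceOff k (e i) (e j),
        x * y ∈ peirceDiag k (e i) ⊔ peirceDiag k (e j)) ∧
    (∀ i j m, i ≠ j → j ≠ m → i ≠ m →
        ∀ x ∈ peirceOff k (e i) (e j), ∀ y ∈ peirceOff k (e j) (e m),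
        x * y ∈ peirceOff k (e i) (e m)) ∧
    (∀ i j, i ≠ j → ∀ x ∈ peirceDiag k (e i), ∀ y ∈ peirceDiag k (e j), x * y = 0) ∧
    (∀ i j m, i ≠ j → j ≠ m → i ≠ m →
        ∀ x ∈ peirceDiag k (e i), ∀ y ∈ peirceOff k (e j) (e m), x * y = 0) ∧
    (∀ i j m l, i ≠ j → i ≠ m → i ≠ l → j ≠ m → j ≠ l → m ≠ l →
        ∀ x ∈ peirceOff k (e i) (e j), ∀ y ∈ peirceOff k (e m) (e l), x * y = 0) := by
  let _ : NonAssocCommRing J := { ‹NonAssocRing J› with mul_comm := hcomm }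
  have : IsCommJordan J := ⟨fun x y ↦ by
    rw [mul_comm x y, mul_comm (y * x), ← hJordan, mul_comm (x * x) y, mul_comm]⟩
  refine ⟨fun i x hx y hy ↦ ?_, fun i j hij x hx y hy ↦ ?_, fun i j hij x hx y hy ↦ ?_,
    fun i j m hij hjm him x hx y hy ↦ ?_, fun i j hij x hx y hy ↦ ?_,
    fun i j m hij hjm him x hx y hy ↦ ?_,
    fun i j m l hij him hil hjm hjl hml x hx y hy ↦ ?_⟩
  · exact mul_mem_peirceDiag hchar (hidem i) hx hy
  · exact mul_mem_peirceOff_of_mem_peirceOff_peirceDiag hchar (hidem i) (hidem j)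
      (horth i j hij) hx hy
  · exact mul_mem_sup_peirceDiag_of_mem_peirceOff hchar (hidem i) (hidem j) (horth i j hij) hx hy
  · exact mul_mem_peirceOff_of_mem_peirceOff_peirceOff hchar (hidem i) (hidem j) (hidem m)
      (horth i j hij) (horth j m hjm) (horth i m him) hx hy
  · exact mul_eq_zero_of_mem_peirceDiag_peirceDiag hchar (hidem i) (hidem j) (horth i j hij) hx hy
  · exact mul_eq_zero_of_mem_peirceDiag_peirceOff hchar (hidem i) (hidem j) (hidem m)
      (horth i j hij) (horth j m hjm) (horth i m him) hx hy
  · exact mul_eq_zero_of_mem_peirceOff_peirceOff hchar (hidem i) (hidem j) (hidem m) (hidem l)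
      (horth i j hij) (horth i m him) (horth i l hil) (horth j m hjm) (horth j l hjl)
      (horth m l hml) hx hy

/-- Let `J` be a unital Jordan algebra over a field `k` of characteristic ≠ 2 whose identity
element decomposes as `1 = e_1 + ⋯ + e_n` into pairwise orthogonal idempotents. With
`J_ii = {x : x·e_i = x}` and `J_ij = {x : x·e_i = (1/2)x = x·e_j}` for `i ≠ j`, the Peirce
multiplication rules hold: for pairwise distinct indices `i, j, m, l`:
`J_ii·J_ii ⊆ J_ii`, `J_ij·J_ii ⊆ J_ij`, `J_ij·J_ij ⊆ J_ii + J_jj`, `J_ij·J_jm ⊆ J_im`, and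
`J_ii·J_jj = J_ii·J_jm = J_ij·J_ml = 0`. -/
theorem peirce_multiplication_many_idempotents (hchar : (2 : k) ≠ 0)
    (hcomm : ∀ x y : J, x * y = y * x)
    (hJordan : ∀ x y : J, ((x * x) * y) * x = (x * x) * (y * x))
    {n : ℕ} (e : Fin n → J)
    (hidem : ∀ i, e i * e i = e i)
    (horth : ∀ i j, i ≠ j → e i * e j = 0)
    (hsum : ∑ i, e i = 1) :
    (∀ i, ∀ x ∈ peirceDiag k (e i), ∀ y ∈ peirceDiag k (e i),
        x * y ∈ peirceDiag k (e i)) ∧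
    (∀ i j, i ≠ j → ∀ x ∈ peirceOff k (e i) (e j), ∀ y ∈ peirceDiag k (e i),
        x * y ∈ peirceOff k (e i) (e j)) ∧
    (∀ i j, i ≠ j → ∀ x ∈ peirceOff k (e i) (e j), ∀ y ∈ peirceOff k (e i) (e j),
        x * y ∈ peirceDiag k (e i) ⊔ peirceDiag k (e j)) ∧
    (∀ i j m, i ≠ j → j ≠ m → i ≠ m →
        ∀ x ∈ peirceOff k (e i) (e j), ∀ y ∈ peirceOff k (e j) (e m),
        x * y ∈ peirceOff k (e i) (e m)) ∧
    (∀ i j, i ≠ j → ∀ x ∈ peirceDiag k (e i), ∀ y ∈ peirceDiag k (e j), x * y = 0) ∧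
    (∀ i j m, i ≠ j → j ≠ m → i ≠ m →
        ∀ x ∈ peirceDiag k (e i), ∀ y ∈ peirceOff k (e j) (e m), x * y = 0) ∧
    (∀ i j m l, i ≠ j → i ≠ m → i ≠ l → j ≠ m → j ≠ l → m ≠ l →
        ∀ x ∈ peirceOff k (e i) (e j), ∀ y ∈ peirceOff k (e m) (e l), x * y = 0) :=
  peirce_multiplication_many_idempotents_general hchar hcomm hJordan e hidem horth
end

section
/- Let J be a finite-dimensional Jordan algebra over a field k of characteristic ≠ 2, let e ∈ J be an idempotent, let N be a nilpotent ideal of J, and write N_i = N ∩ J_i(e). If dim_k N_{1/2} = 1, then N_i·N_{1/2} = 0 for i ∈ {0, 1}. -/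
variable {k : Type*} [Field k] {J : Type*} [NonUnitalNonAssocCommRing J]
  [Module k J] [SMulCommClass k J J] [IsScalarTower k J J]

/-- The Peirce component `J_c(e) = {x ∈ J : e·x = c·x}`, a `k`-subspace of `J`. -/
def peirceComp (e : J) (c : k) : Submodule k J where
  carrier := {x : J | e * x = c • x}
  add_mem' := by
    intro a b ha hb
    simp only [Set.mem_setOf_eq] at *
    rw [mul_add, ha, hb, smul_add]
  zero_mem' := by simp
  smul_mem' := by
    intro r x hx
    simp only [Set.mem_setOf_eq] at *
    rw [mul_smul_comm, hx, smul_comm]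

/-- For subspaces `A, B ⊆ J`, `A·B` is the `k`-subspace spanned by all products `a·b`
with `a ∈ A`, `b ∈ B`. -/
def submoduleMul (A B : Submodule k J) : Submodule k J :=
  Submodule.span k {z : J | ∃ a ∈ A, ∃ b ∈ B, z = a * b}

/-- The descending series of a subspace `N`: `nseries N 0 = N^⟨1⟩ = N` and
`nseries N m = N^⟨m+1⟩ = N^⟨m⟩·N`. -/
def nseries (N : Submodule k J) : ℕ → Submodule k J
  | 0 => N
  | m + 1 => submoduleMul (nseries N m) N

/-!
Write `L x` for multiplication by `x`. Linearizing the Jordan identity at an idempotent `e` shows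
that `L e` commutes with `L (2 (e * x) - x)`, which is `(2 i - 1) L x` when `x ∈ J_i(e)`. So for
`i ≠ 1/2` the operator `L x` preserves the eigenspaces of `L e`. On a one-dimensional `N ∩ J_j(e)`
it then acts by a scalar, and this scalar is zero because `N` is nilpotent.
-/

theorem isCommJordan_of_mul_self_mul_mul {A : Type*} [CommMagma A]
    (h : ∀ x y : A, x * x * y * x = x * x * (y * x)) : IsCommJordan A where
  lmul_comm_rmul_rmul a b := by
    rw [mul_comm (a * b), mul_comm a b, ← h, mul_comm _ a, mul_comm (a * a)]

theorem two_nsmul_mul_left_comm_of_isIdempotentElem {A : Type*} [NonUnitalNonAssocCommRing A]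
    [IsCommJordan A] {e : A} (he : IsIdempotentElem e) (x y : A) :
    2 • (e * ((2 • (e * x) - x) * y)) = 2 • ((2 • (e * x) - x) * (e * y)) := by
  have linearized : 2 • (e * (e * x * y) - e * x * (e * y) + (e * (x * e * y) - x * e * (e * y)) +
      (x * (e * e * y) - e * e * (x * y))) = 0 :=
    DFunLike.congr_fun (two_nsmul_lie_lmul_lmul_add_add_eq_zero e e x) y
  rw [he.eq, mul_comm x e] at linearized
  simp only [two_nsmul, add_mul, mul_add, sub_mul, mul_sub] at linearized ⊢
  linear_combination (norm := abel) linearized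

section Peirce

variable [IsCommJordan J] {e x y : J} {i j : k}

theorem mul_left_comm_of_mem_peirceComp (hchar : (2 : k) ≠ 0) (he : IsIdempotentElem e)
    (hi : i ≠ 2⁻¹) (hx : x ∈ peirceComp e i) (y : J) : e * (x * y) = x * (e * y) := by
  have hx : e * x = i • x := hx
  have two_mul_sub_one_ne_zero : 2 * i - 1 ≠ 0 := fun h ↦
    hi (eq_inv_of_mul_eq_one_right (sub_eq_zero.mp h))
  have scaled : (2 : k) • (2 * i - 1) • (e * (x * y)) = (2 : k) • (2 * i - 1) • (x * (e * y)) := by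
    have linearized := two_nsmul_mul_left_comm_of_isIdempotentElem he x y
    have : 2 • (e * x) - x = (2 * i - 1) • x := by rw [hx]; module
    simp only [this, smul_mul_assoc, mul_smul_comm] at linearized
    simpa only [ofNat_smul_eq_nsmul] using linearized
  exact smul_right_injective J two_mul_sub_one_ne_zero (smul_right_injective J hchar scaled)

theorem mul_mem_peirceComp (hchar : (2 : k) ≠ 0) (he : IsIdempotentElem e) (hi : i ≠ 2⁻¹)
    (hx : x ∈ peirceComp e i) (hy : y ∈ peirceComp e j) : x * y ∈ peirceComp e j := by
  have hy : e * y = j • y := hy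
  calc e * (x * y) = x * (e * y) := mul_left_comm_of_mem_peirceComp hchar he hi hx y
    _ = j • (x * y) := by rw [hy, mul_smul_comm]

end Peirce

section Nilpotent

variable {N : Submodule k J} {x y : J} {c : k}

omit [SMulCommClass k J J] [IsScalarTower k J J] in
theorem mem_nseries_of_mul_eq_smul (hx : x ∈ N) (hy : y ∈ N) (hc : c ≠ 0) (hxy : x * y = c • y)
    (m : ℕ) : y ∈ nseries N m := by
  induction m with
  | zero => exact hy
  | succ m ih =>
    have mul_mem : y * x ∈ nseries N (m + 1) := Submodule.subset_span ⟨y, ih, x, hx, rfl⟩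
    rw [mul_comm, hxy] at mul_mem
    exact (Submodule.smul_mem_iff _ hc).mp mul_mem

omit [SMulCommClass k J J] [IsScalarTower k J J] in
theorem mul_eq_zero_of_mul_eq_smul_of_nilpotent (hnilp : ∃ m, nseries N m = ⊥) (hx : x ∈ N)
    (hy : y ∈ N) (hxy : x * y = c • y) : x * y = 0 := by
  obtain ⟨m, hm⟩ := hnilp
  by_cases hc : c = 0
  · rw [hxy, hc, zero_smul]
  · have y_mem_bot : y ∈ (⊥ : Submodule k J) := hm ▸ mem_nseries_of_mul_eq_smul hx hy hc hxy m
    rw [(Submodule.mem_bot k).mp y_mem_bot, mul_zero]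

end Nilpotent

theorem dim_one_half_prod_zero_general [IsCommJordan J] (hchar : (2 : k) ≠ 0)
    {e : J} (he : IsIdempotentElem e) {N : Submodule k J} (hN : ∀ x ∈ N, ∀ y ∈ N, x * y ∈ N)
    (hnilp : ∃ m, nseries N m = ⊥) {i j : k} (hi : i ≠ 2⁻¹)
    (hdim : Module.finrank k ↥(N ⊓ peirceComp e j) = 1) :
    ∀ x ∈ N ⊓ peirceComp e i, ∀ y ∈ N ⊓ peirceComp e j, x * y = 0 := by
  rintro x ⟨hxN, hxe⟩ y hy
  have hxy : x * y ∈ N ⊓ peirceComp e j :=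
    ⟨hN x hxN y hy.1, mul_mem_peirceComp hchar he hi hxe hy.2⟩
  obtain rfl | hy0 := eq_or_ne y 0
  · exact mul_zero x
  rw [eq_span_singleton_of_mem_of_finrank_eq_one hdim hy hy0] at hxy
  obtain ⟨c, hc⟩ := Submodule.mem_span_singleton.mp hxy
  exact mul_eq_zero_of_mul_eq_smul_of_nilpotent hnilp hxN hy.1 hc.symm

/-- Let `J` be a finite-dimensional Jordan algebra over a field `k` of characteristic ≠ 2,
`e` an idempotent, `N` a nilpotent ideal, `N_i = N ∩ J_i(e)`. If `dim_k N_{1/2} = 1`,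
then `N_i·N_{1/2} = 0` for `i ∈ {0, 1}`. -/
theorem dim_one_half_prod_zero (hchar : (2 : k) ≠ 0)
    [FiniteDimensional k J]
    (hJordan : ∀ x y : J, ((x * x) * y) * x = (x * x) * (y * x))
    (e : J) (he : e * e = e) (hne : e ≠ 0)
    (N : Submodule k J) (hideal : ∀ x ∈ N, ∀ y : J, x * y ∈ N)
    (hnilp : ∃ m, nseries N m = ⊥)
    (hdim : Module.finrank k ↥(N ⊓ peirceComp e (2⁻¹ : k)) = 1) :
    ∀ i : k, i = 0 ∨ i = 1 →
      ∀ x ∈ N ⊓ peirceComp e i, ∀ y ∈ N ⊓ peirceComp e (2⁻¹ : k), x * y = 0 := by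
  intro i hi
  have i_ne_half : i ≠ 2⁻¹ := by grind
  have : IsCommJordan J := isCommJordan_of_mul_self_mul_mul hJordan
  exact dim_one_half_prod_zero_general hchar he (fun x hx y _ ↦ hideal x hx y) hnilp i_ne_half
    hdim
end

section
/- Let J be a Jordan algebra over a field k of characteristic ≠ 2, let e ∈ J be an idempotent, let N be a nilpotent ideal of J, and write N_i = N ∩ J_i(e). If for some i ∈ {0, 1} one has N_{1/2}·N_i = N_{1/2} (equality of subspaces), then N_{1/2} = 0; in other words, for N_{1/2} ≠ 0 the inclusion N_{1/2}·N_i ⊆ N_{1/2} is always strict. -/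
variable {k : Type*} [Field k] {J : Type*} [NonUnitalNonAssocCommRing J]
  [Module k J] [SMulCommClass k J J] [IsScalarTower k J J]

section

variable {K : Type*} [Field K] {A : Type*} [NonUnitalNonAssocCommRing A] [Module K A]

theorem submoduleMul_mono {P P' Q Q' : Submodule K A} (hP : P ≤ P') (hQ : Q ≤ Q') :
    submoduleMul P Q ≤ submoduleMul P' Q' := by
  refine Submodule.span_mono ?_
  rintro _ ⟨p, hp, q, hq, rfl⟩
  exact ⟨p, hP hp, q, hQ hq, rfl⟩

theorem le_nseries_of_le_submoduleMul {P Q N : Submodule K A} (hP : P ≤ N) (hQ : Q ≤ N)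
    (h : P ≤ submoduleMul P Q) (m : ℕ) : P ≤ nseries N m := by
  induction m with
  | zero => exact hP
  | succ m ih => exact h.trans (submoduleMul_mono ih hQ)

theorem half_mul_diag_ne_general {P Q N : Submodule K A} (hP : P ≤ N) (hQ : Q ≤ N)
    (hnilp : ∃ m, nseries N m = ⊥) (h : P ≤ submoduleMul P Q) : P = ⊥ := by
  obtain ⟨m, hm⟩ := hnilp
  exact eq_bot_iff.mpr (hm ▸ le_nseries_of_le_submoduleMul hP hQ h m)

end

/-- Let `J` be a Jordan algebra over a field `k` of characteristic ≠ 2, `e` an idempotent,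
`N` a nilpotent ideal, `N_i = N ∩ J_i(e)`. If `N_{1/2}·N_i = N_{1/2}` for some `i ∈ {0, 1}`,
then `N_{1/2} = 0`; i.e. for `N_{1/2} ≠ 0` the inclusion `N_{1/2}·N_i ⊆ N_{1/2}` is strict. -/
theorem half_mul_diag_ne (hchar : (2 : k) ≠ 0)
    (hJordan : ∀ x y : J, ((x * x) * y) * x = (x * x) * (y * x))
    (e : J) (he : e * e = e) (hne : e ≠ 0)
    (N : Submodule k J) (hideal : ∀ x ∈ N, ∀ y : J, x * y ∈ N)
    (hnilp : ∃ m, nseries N m = ⊥)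
    (i : k) (hi : i = 0 ∨ i = 1)
    (h : submoduleMul (N ⊓ peirceComp e (2⁻¹ : k)) (N ⊓ peirceComp e i)
        = N ⊓ peirceComp e (2⁻¹ : k)) :
    N ⊓ peirceComp e (2⁻¹ : k) = ⊥ :=
  half_mul_diag_ne_general inf_le_left inf_le_left hnilp h.ge
end

section
/- Let J be a Jordan algebra over a field k of characteristic ≠ 2, let e ∈ J be an idempotent, and let N be an ideal of J contained in J_{1/2}(e), i.e., e·x = (1/2)x for every x ∈ N. Then N·N = 0. -/
variable {k : Type*} [Field k] {J : Type*} [NonUnitalNonAssocCommRing J]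
  [Module k J] [SMulCommClass k J J] [IsScalarTower k J J]

/-!
For `x, y ∈ J_c(e)` the linearized Jordan identity
`[L_e, L_{xy}] + [L_x, L_{ye}] + [L_y, L_{ex}] = 0` loses its last two terms, which become
`c[L_x, L_y] + c[L_y, L_x]`. So `L_e` and `L_{xy}` commute, and applying both composites to the
idempotent `e` gives `e(e(xy)) = e(xy)`. An element `xy` of `J_{1/2}(e)` then satisfies
`(1/4) xy = (1/2) xy`.
-/

theorem isCommJordan_of_jordan_identity {A : Type*} [CommMagma A]
    (hJordan : ∀ x y : A, ((x * x) * y) * x = (x * x) * (y * x)) : IsCommJordan A where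
  lmul_comm_rmul_rmul a b := by
    rw [mul_comm (a * b), mul_comm a b, ← hJordan, mul_comm _ a, mul_comm b]

section IsCommJordan

variable [IsCommJordan J] {e x y : J} {c : k}

theorem commute_mulLeft_mulLeft_mul_of_mem_peirceComp (hchar : (2 : k) ≠ 0)
    (hx : x ∈ peirceComp e c) (hy : y ∈ peirceComp e c) :
    Commute (AddMonoid.End.mulLeft e) (AddMonoid.End.mulLeft (x * y)) := by
  have hex : e * x = c • x := hx
  have hye : y * e = c • y := (mul_comm y e).trans hy
  ext z
  have linearized_jordan : 2 • (e * (x * y * z) - x * y * (e * z) +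
      (x * (y * e * z) - y * e * (x * z)) + (y * (e * x * z) - e * x * (y * z))) = 0 :=
    DFunLike.congr_fun (two_nsmul_lie_lmul_lmul_add_add_eq_zero e x y) z
  have two_smul_lie : (2 : k) • (e * (x * y * z) - x * y * (e * z)) = 0 := by
    rw [← linearized_jordan, hex, hye, two_smul, two_nsmul]
    simp only [smul_mul_assoc, mul_smul_comm]
    abel
  exact sub_eq_zero.mp ((smul_eq_zero_iff_right hchar).mp two_smul_lie)

theorem idempotent_mul_mul_mul_of_mem_peirceComp (hchar : (2 : k) ≠ 0)
    (he : IsIdempotentElem e) (hx : x ∈ peirceComp e c) (hy : y ∈ peirceComp e c) :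
    e * (e * (x * y)) = e * (x * y) :=
  calc e * (e * (x * y)) = e * (x * y * e) := by rw [mul_comm e (x * y)]
    _ = x * y * (e * e) :=
      DFunLike.congr_fun (commute_mulLeft_mulLeft_mul_of_mem_peirceComp hchar hx hy) e
    _ = e * (x * y) := by rw [he.eq, mul_comm]

theorem ideal_in_half_sq_zero_general (hchar : (2 : k) ≠ 0) (he : IsIdempotentElem e)
    (hx : x ∈ peirceComp e (2⁻¹ : k)) (hy : y ∈ peirceComp e (2⁻¹ : k))
    (hxy : x * y ∈ peirceComp e (2⁻¹ : k)) : x * y = 0 := by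
  have half_mul : e * (x * y) = (2⁻¹ : k) • (x * y) := hxy
  have quarter_eq_half : (2⁻¹ : k) • (2⁻¹ : k) • (x * y) = (2⁻¹ : k) • (x * y) := by
    simpa only [half_mul, mul_smul_comm] using
      idempotent_mul_mul_mul_of_mem_peirceComp hchar he hx hy
  have half_smul_eq_self : (2⁻¹ : k) • (x * y) = x * y :=
    smul_right_injective J (inv_ne_zero hchar) quarter_eq_half
  rw [inv_smul_eq_iff₀ hchar, two_smul] at half_smul_eq_self
  exact left_eq_add.mp half_smul_eq_self

end IsCommJordan

/-- Let `J` be a Jordan algebra over a field `k` of characteristic ≠ 2, `e` an idempotent,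
and `N` an ideal of `J` contained in `J_{1/2}(e)`. Then `N·N = 0`. -/
theorem ideal_in_half_sq_zero (hchar : (2 : k) ≠ 0)
    (hJordan : ∀ x y : J, ((x * x) * y) * x = (x * x) * (y * x))
    (e : J) (he : e * e = e) (hne : e ≠ 0)
    (N : Submodule k J) (hideal : ∀ x ∈ N, ∀ y : J, x * y ∈ N)
    (hsub : N ≤ peirceComp e (2⁻¹ : k)) :
    ∀ x ∈ N, ∀ y ∈ N, x * y = 0 := by
  have := isCommJordan_of_jordan_identity hJordan
  exact fun x hx y hy =>
    ideal_in_half_sq_zero_general hchar he (hsub hx) (hsub hy) (hsub (hideal x hx y))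
end
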